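/- Let W ⊂ B(H) be a continuous von Neumann algebra, e ∈ W a projection, and J a conjugation on H. Then the TRO eW ⊕ W^t e^t = {(ex, y^t e^t) : x,y ∈ W} ⊂ B(H ⊕ H), together with the map α : eW → eW ⊕ W^t e^t given by α(x) = (x, x^t), is a universal enveloping TRO of the JC*-triple eW; that is, T*(eW) = eW ⊕ W^t e^t. -/

import Mathlib

open ContinuousLinearMap

noncomputable section

/-- The ternary product `x y* z` of bounded operators in `B(K,H)`. -/
def tri {K H : Type} [NormedAddCommGroup K] [InnerProductSpace ℂ K] [CompleteSpace K]
    [NormedAddCommGroup H] [InnerProductSpace ℂ H] [CompleteSpace H]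
    (x y z : K →L[ℂ] H) : K →L[ℂ] H := x ∘L (adjoint y) ∘L z

/-- The Jordan triple product `{x,y,z} = (x y* z + z y* x)/2`. -/
def jtri {K H : Type} [NormedAddCommGroup K] [InnerProductSpace ℂ K] [CompleteSpace K]
    [NormedAddCommGroup H] [InnerProductSpace ℂ H] [CompleteSpace H]
    (x y z : K →L[ℂ] H) : K →L[ℂ] H := (2 : ℂ)⁻¹ • (tri x y z + tri z y x)

/-- A TRO: a norm-closed subspace of `B(K,H)` closed under `x y* z`. -/
def IsTRO {K H : Type} [NormedAddCommGroup K] [InnerProductSpace ℂ K] [CompleteSpace K]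
    [NormedAddCommGroup H] [InnerProductSpace ℂ H] [CompleteSpace H]
    (T : Submodule ℂ (K →L[ℂ] H)) : Prop :=
  IsClosed (T : Set (K →L[ℂ] H)) ∧ ∀ x ∈ T, ∀ y ∈ T, ∀ z ∈ T, tri x y z ∈ T

variable {H : Type} [NormedAddCommGroup H] [InnerProductSpace ℂ H] [CompleteSpace H]

/-- A von Neumann algebra is continuous if it contains no nonzero abelian projection. -/
def IsContinuousVNA (W : VonNeumannAlgebra H) : Prop :=
  ∀ q : H →L[ℂ] H, q ∈ W → IsSelfAdjoint q → q * q = q →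
    (∀ x ∈ W, ∀ y ∈ W, (q * x * q) * (q * y * q) = (q * y * q) * (q * x * q)) → q = 0

/-- A von Neumann algebra `W`, regarded as a subspace of `B(H)`. -/
def vnSubmodule (W : VonNeumannAlgebra H) : Submodule ℂ (H →L[ℂ] H) :=
  Subalgebra.toSubmodule W.toStarSubalgebra.toSubalgebra

/-- The JC*-triple (indeed TRO) `eW = {e x : x ∈ W}`. -/
def corner (W : VonNeumannAlgebra H) (e : H →L[ℂ] H) : Submodule ℂ (H →L[ℂ] H) :=
  (vnSubmodule W).map (LinearMap.mulLeft ℂ e)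

/-- The transpose `x^t = J x* J` with respect to a conjugation `J`. -/
def transp (J : H ≃ₗᵢ⋆[ℂ] H) (x : H →L[ℂ] H) : H →L[ℂ] H where
  toFun h := J (adjoint x (J h))
  map_add' h₁ h₂ := by simp
  map_smul' c h := by simp [map_smulₛₗ]
  cont := J.continuous.comp ((adjoint x).continuous.comp J.continuous)

/-- Transposition as a linear map on `B(H)`. -/
def transpL (J : H ≃ₗᵢ⋆[ℂ] H) : (H →L[ℂ] H) →ₗ[ℂ] (H →L[ℂ] H) where
  toFun := transp J
  map_add' x y := by ext h; simp [transp]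
  map_smul' c x := by ext h; simp [transp, map_smulₛₗ]

/-- The TRO `W^t e^t = {y^t e^t : y ∈ W}`. -/
def cornerT (W : VonNeumannAlgebra H) (e : H →L[ℂ] H) (J : H ≃ₗᵢ⋆[ℂ] H) :
    Submodule ℂ (H →L[ℂ] H) :=
  (vnSubmodule W).map ((LinearMap.mulRight ℂ (transp J e)).comp (transpL J))

/-- The TRO `eW ⊕ W^t e^t`, realized with componentwise ternary product (equivalently,
acting diagonally on `H ⊕ H`). -/
def envTRO (W : VonNeumannAlgebra H) (e : H →L[ℂ] H) (J : H ≃ₗᵢ⋆[ℂ] H) :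
    Submodule ℂ ((H →L[ℂ] H) × (H →L[ℂ] H)) :=
  (corner W e).prod (cornerT W e J)

/-- The componentwise ternary product on `B(H) × B(H)` (the ternary product of the
diagonal action on `H ⊕ H`). -/
def ptri (a b c : (H →L[ℂ] H) × (H →L[ℂ] H)) : (H →L[ℂ] H) × (H →L[ℂ] H) :=
  (tri a.1 b.1 c.1, tri a.2 b.2 c.2)

/-- The map `α : eW → eW ⊕ W^t e^t`, `α x = (x, x^t)`. -/
def envMap (W : VonNeumannAlgebra H) (e : H →L[ℂ] H) (J : H ≃ₗᵢ⋆[ℂ] H) :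
    ↥(corner W e) →ₗ[ℂ] (H →L[ℂ] H) × (H →L[ℂ] H) :=
  ((corner W e).subtype).prod ((transpL J).comp (corner W e).subtype)

/-!
Since `W` has no abelian projection, no reduced algebra `qWq` with `q ≠ 0` is commutative, so each
contains a nonzero element of square zero, whose polar factor is a partial isometry of square
zero. Maximality (Zorn's lemma for the star order, with weak operator compactness of the unit
ball) then provides `w ∈ W` with `w² = 0` and `ww* + w*w = e`.

Let `π` be a triple homomorphism of `eW`. The elements `A = π(ww*)π(w*)*` and `B = π(w*)*π(ww*)`
satisfy `π(wx) = Aπ(x) + π(x)B` and `Aπ(x)B = 0`. With `P = AA* + A*A` and `Q = B*B + BB*` this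
gives `π = Pπ + πQ`, where `Pπ` preserves `xy*z`, `πQ` reverses it, and the two parts are
orthogonal. Hence `(x, yᵗ) ↦ Pπ(x) + π(y)Q` is a TRO homomorphism extending `π`; its range lies in
the TRO generated by that of `π` because left multiplication by `P` is a combination of ternary
products. The image of `α` generates `eW ⊕ Wᵗeᵗ` because the ternary product of `α(w*w)`, `α(w)`
and `α(ex)` is `(w*x, 0)`.
-/

section Reduced

theorem mul_mul_eq_zero_of_mul_eq_zero {R : Type*} [Ring R] [IsReduced R] {a b : R}
    (hab : a * b = 0) (x : R) : a * x * b = 0 := by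
  have hba : b * a = 0 := IsReduced.eq_zero _ ⟨2, by simp [sq, mul_assoc, ← mul_assoc a b, hab]⟩
  refine IsReduced.eq_zero _ ⟨2, ?_⟩
  rw [sq]
  linear_combination (norm := noncomm_ring) a * x * hba * x * b

theorem norm_cfcAbs_sub_algebraMap_le {A : Type*} [CStarAlgebra A] [PartialOrder A]
    [StarOrderedRing A] {h : A} (hh : IsSelfAdjoint h) :
    ‖CFC.abs h - algebraMap ℝ A (‖h‖ / 2)‖ ≤ ‖h‖ / 2 := by
  nontriviality A
  rw [CFC.abs_eq_cfc_norm h, ← cfc_const (‖h‖ / 2) h, ← cfc_sub _ _ h]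
  refine norm_cfc_le (by positivity) fun t ht => ?_
  have ht' : |t| ≤ ‖h‖ := spectrum.norm_le_norm_of_mem ht
  rw [Real.norm_eq_abs, Real.norm_eq_abs, abs_le]
  constructor <;> linarith [abs_nonneg t]

theorem norm_add_eq_norm_sub {A : Type*} [NonUnitalNormedRing A] [StarRing A] [CStarRing A]
    {y z : A} (hyz : star y * z = 0) : ‖y + z‖ = ‖y - z‖ := by
  have hzy : star z * y = 0 := by simpa using congrArg star hyz
  rw [← sq_eq_sq₀ (norm_nonneg _) (norm_nonneg _), sq, sq, ← CStarRing.norm_star_mul_self,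
    ← CStarRing.norm_star_mul_self]
  simp [mul_add, add_mul, mul_sub, sub_mul, hyz, hzy]

theorem norm_commutator_eq_norm_commutator_abs {A : Type*} [CStarAlgebra A] [PartialOrder A]
    [StarOrderedRing A] [IsReduced A] {h : A} (hh : IsSelfAdjoint h) (x : A) :
    ‖⁅h, x⁆‖ = ‖⁅CFC.abs h, x⁆‖ := by
  have hpn := mul_mul_eq_zero_of_mul_eq_zero (CFC.posPart_mul_negPart h)
  have hp : star h⁺ = h⁺ := (CFC.posPart_nonneg h).isSelfAdjoint.star_eq
  have horth : star ⁅h⁺, x⁆ * ⁅h⁻, x⁆ = 0 := by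
    simp only [Ring.lie_def, star_sub, star_mul, hp]
    linear_combination (norm := noncomm_ring) star x * CFC.posPart_mul_negPart h * x
      - star x * hpn x - hpn (star x) * x + hpn (star x * x)
  calc ‖⁅h, x⁆‖ = ‖⁅h⁺, x⁆ - ⁅h⁻, x⁆‖ := by
        conv_lhs => rw [← CFC.posPart_sub_negPart h]
        simp only [Ring.lie_def, sub_mul, mul_sub]
        abel_nf
    _ = ‖⁅h⁺, x⁆ + ⁅h⁻, x⁆‖ := (norm_add_eq_norm_sub horth).symm
    _ = ‖⁅CFC.abs h, x⁆‖ := by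
        rw [← CFC.posPart_add_negPart h]
        simp only [Ring.lie_def, add_mul, mul_add]
        abel_nf

variable {A : Type*} [CStarAlgebra A]

theorem norm_commutator_le [IsReduced A] (n : ℕ) {h : A} (hh : IsSelfAdjoint h) (x : A) :
    ‖⁅h, x⁆‖ ≤ 2 * ‖h‖ * ‖x‖ / 2 ^ n := by
  let _ := CStarAlgebra.spectralOrder A
  have := CStarAlgebra.spectralOrderedRing A
  induction n generalizing h with
  | zero =>
    rw [Ring.lie_def]
    calc _ ≤ ‖h * x‖ + ‖x * h‖ := norm_sub_le _ _
      _ ≤ ‖h‖ * ‖x‖ + ‖x‖ * ‖h‖ := add_le_add (norm_mul_le _ _) (norm_mul_le _ _)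
      _ = 2 * ‖h‖ * ‖x‖ / 2 ^ 0 := by ring
  | succ n ih =>
    have hc : ⁅CFC.abs h - algebraMap ℝ A (‖h‖ / 2), x⁆ = ⁅CFC.abs h, x⁆ := by
      rw [Ring.lie_def, sub_mul, mul_sub, Algebra.commutes, sub_sub_sub_cancel_right, Ring.lie_def]
    calc ‖⁅h, x⁆‖ = ‖⁅CFC.abs h - algebraMap ℝ A (‖h‖ / 2), x⁆‖ := by
          rw [norm_commutator_eq_norm_commutator_abs hh, hc]
      _ ≤ 2 * ‖CFC.abs h - algebraMap ℝ A (‖h‖ / 2)‖ * ‖x‖ / 2 ^ n :=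
          ih ((CFC.abs_nonneg h).isSelfAdjoint.sub (.algebraMap A (.all _)))
      _ ≤ 2 * (‖h‖ / 2) * ‖x‖ / 2 ^ n := by gcongr; exact norm_cfcAbs_sub_algebraMap_le hh
      _ = 2 * ‖h‖ * ‖x‖ / 2 ^ (n + 1) := by ring

theorem commute_of_isReduced [IsReduced A] (a b : A) : Commute a b := by
  have hsa {h : A} (hh : IsSelfAdjoint h) : Commute h b := by
    have hlim : Filter.Tendsto (fun n : ℕ => 2 * ‖h‖ * ‖b‖ / 2 ^ n) .atTop (nhds 0) :=
      tendsto_const_nhds.div_atTop (tendsto_pow_atTop_atTop_of_one_lt one_lt_two)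
    rw [commute_iff_lie_eq, ← norm_le_zero_iff]
    exact ge_of_tendsto' hlim fun n => norm_commutator_le n hh b
  rw [← realPart_add_I_smul_imaginaryPart a]
  exact (hsa (realPart a).2).add_left ((hsa (imaginaryPart a).2).smul_left _)

theorem commute_of_forall_sq_eq_zero {A : Type*} [NonUnitalCStarAlgebra A]
    (hA : ∀ a : A, a * a = 0 → a = 0) (a b : A) : Commute a b := by
  have : IsReduced (Unitization ℂ A) := by
    refine (isReduced_iff_pow_one_lt 2 one_lt_two).mpr fun x hx => ?_
    rw [sq] at hx
    have hfst : x.fst = 0 := mul_self_eq_zero.mp (congrArg (·.fst) hx)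
    have hsnd : x.snd = 0 := hA _ (by simpa [hfst] using congrArg (·.snd) hx)
    exact Unitization.ext hfst hsnd
  exact Unitization.inr_injective (R := ℂ) (by
    simpa using (commute_of_isReduced (a : Unitization ℂ A) b).eq)

end Reduced

section Halving

/-- A partial isometry with `w² = 0`, that is, with orthogonal initial and final projections. -/
structure IsSqZeroPartialIsometry {D : Type*} [Mul D] [Zero D] [Star D] (w : D) : Prop where
  mul_self : w * w = 0
  mul_star_mul_self : w * (star w * w) = w

namespace IsSqZeroPartialIsometry

variable {D : Type*} [NonUnitalRing D] [StarRing D] {w : D}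

protected theorem star (hw : IsSqZeroPartialIsometry w) : IsSqZeroPartialIsometry (star w) where
  mul_self := by rw [← star_mul, hw.mul_self, star_zero]
  mul_star_mul_self := by
    simpa only [star_mul, star_star, mul_assoc] using congrArg star hw.mul_star_mul_self

attribute [simp] mul_self mul_star_mul_self

@[simp]
theorem mul_self_mul (hw : IsSqZeroPartialIsometry w) (x : D) : w * (w * x) = 0 := by
  rw [← mul_assoc, hw.mul_self, zero_mul]

@[simp]
theorem mul_star_mul_self_mul (hw : IsSqZeroPartialIsometry w) (x : D) :
    w * (star w * (w * x)) = w * x := by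
  rw [← mul_assoc (star w), ← mul_assoc, hw.mul_star_mul_self]

@[simp]
theorem star_mul_mul_star (hw : IsSqZeroPartialIsometry w) : star w * (w * star w) = star w := by
  simpa only [star_star] using hw.star.mul_star_mul_self

theorem isStarProjection_star_mul_self (hw : IsSqZeroPartialIsometry w) :
    IsStarProjection (star w * w) :=
  ⟨by rw [IsIdempotentElem, mul_assoc, hw.mul_star_mul_self], .star_mul_self w⟩

theorem isStarProjection_support (hw : IsSqZeroPartialIsometry w) :
    IsStarProjection (w * star w + star w * w) := by
  have h := hw.star.isStarProjection_star_mul_self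
  rw [star_star] at h
  exact h.add hw.isStarProjection_star_mul_self (by simp [mul_assoc, hw.star])

protected theorem add {u : D} (hw : IsSqZeroPartialIsometry w)
    (hu : IsSqZeroPartialIsometry u) (hwu : w * u = 0) (huw : u * w = 0) (hswu : star w * u = 0)
    (husw : u * star w = 0) :
    IsSqZeroPartialIsometry (w + u) where
  mul_self := by simp [mul_add, add_mul, hw, hu, hwu, huw]
  mul_star_mul_self := by
    have hsuw : star u * w = 0 := by simpa using congrArg star hswu
    have hwsu : w * star u = 0 := by simpa using congrArg star husw
    rw [star_add]
    linear_combination (norm := noncomm_ring) hw.mul_star_mul_self + hu.mul_star_mul_self +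
      w * hswu + w * hsuw + hwsu * u + husw * w + husw * u + u * hsuw

end IsSqZeroPartialIsometry

theorem IsSqZeroPartialIsometry.norm_le_one {A : Type*} [NonUnitalNormedRing A] [StarRing A]
    [CStarRing A] {w : A} (hw : IsSqZeroPartialIsometry w) : ‖w‖ ≤ 1 := by
  have h := hw.isStarProjection_star_mul_self.norm_le
  rw [CStarRing.norm_star_mul_self] at h
  nlinarith

theorem IsSqZeroPartialIsometry.unop {R : Type*} [NonUnitalRing R] [StarRing R] {a : Rᵐᵒᵖ}
    (ha : IsSqZeroPartialIsometry a) : IsSqZeroPartialIsometry a.unop where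
  mul_self := congrArg MulOpposite.unop ha.mul_self
  mul_star_mul_self := by
    simpa [mul_assoc] using congrArg MulOpposite.unop ha.mul_star_mul_self

/-- `w` is a partial isometry between complementary halves `w*w` and `ww*` of the projection `e`. -/
structure IsHalving {D : Type*} [NonUnitalRing D] [StarRing D] (e w : D) : Prop
    extends IsSqZeroPartialIsometry w where
  mul_star_add_star_mul : w * star w + star w * w = e

namespace IsHalving

variable {D : Type*} [NonUnitalRing D] [StarRing D] {e w : D}

protected theorem star (hw : IsHalving e w) : IsHalving e (star w) where
  toIsSqZeroPartialIsometry := hw.toIsSqZeroPartialIsometry.star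
  mul_star_add_star_mul := by rw [star_star, add_comm, hw.mul_star_add_star_mul]

theorem isStarProjection (hw : IsHalving e w) : IsStarProjection e :=
  hw.mul_star_add_star_mul ▸ hw.isStarProjection_support

theorem isSelfAdjoint (hw : IsHalving e w) : IsSelfAdjoint e :=
  hw.isStarProjection.isSelfAdjoint

theorem left_mul (hw : IsHalving e w) : e * w = w := by
  simp [← hw.mul_star_add_star_mul, add_mul, mul_assoc, hw.toIsSqZeroPartialIsometry]

theorem left_mul_mul (hw : IsHalving e w) (x : D) : e * (w * x) = w * x := by
  rw [← mul_assoc, hw.left_mul]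

theorem mul_add_mul (hw : IsHalving e w) (x : D) : w * (star w * x) + star w * (w * x) = e * x := by
  rw [← hw.mul_star_add_star_mul, add_mul, mul_assoc, mul_assoc]

end IsHalving

end Halving

section Polar

theorem cfcAbs_mul_eq_zero_iff {A : Type*} [CStarAlgebra A] [PartialOrder A] [StarOrderedRing A]
    {a y : A} : CFC.abs a * y = 0 ↔ a * y = 0 := by
  rw [← CStarRing.star_mul_self_eq_zero_iff, ← CStarRing.star_mul_self_eq_zero_iff (a * y),
    star_mul, star_mul, mul_assoc, mul_assoc, ← mul_assoc _ _ y, ← mul_assoc _ _ y,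
    (CFC.abs_nonneg a).isSelfAdjoint.star_eq, CFC.abs_mul_abs, mul_assoc, mul_assoc]

/-- `w` is the partial isometry of the polar decomposition `a = w|a|`. The inclusion of kernels is
encoded algebraically: `w` annihilates whatever `a` annihilates. -/
structure IsPolarFactor {A : Type*} [CStarAlgebra A] [PartialOrder A] [StarOrderedRing A]
    (a w : A) : Prop where
  mul_abs : w * CFC.abs a = a
  mul_eq_zero {y : A} : a * y = 0 → w * y = 0

namespace IsPolarFactor

variable {A : Type*} [CStarAlgebra A] [PartialOrder A] [StarOrderedRing A] {a w : A}

theorem eq_zero_of_mul_cfcAbs_eq_zero {d : A} (habs : d * CFC.abs a = 0)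
    (hker : ∀ {y}, a * y = 0 → d * y = 0) : d = 0 := by
  have h : CFC.abs a * star d = 0 := by
    simpa [(CFC.abs_nonneg a).isSelfAdjoint.star_eq] using congrArg star habs
  exact CStarRing.mul_star_self_eq_zero_iff d |>.mp (hker (cfcAbs_mul_eq_zero_iff.mp h))

theorem mul_eq_zero_of_mul_eq_zero (hw : IsPolarFactor a w) {y : A} (hy : y * a = 0) :
    y * w = 0 :=
  eq_zero_of_mul_cfcAbs_eq_zero (by rw [mul_assoc, hw.mul_abs, hy])
    fun h => by rw [mul_assoc, hw.mul_eq_zero h, mul_zero]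

theorem mul_star_mul_self (hw : IsPolarFactor a w) : w * (star w * w) = w := by
  have h : CFC.abs a * (star w * w * CFC.abs a - CFC.abs a) = 0 := by
    have h := CFC.abs_mul_abs a
    nth_rw 3 4 [← hw.mul_abs] at h
    rw [star_mul, (CFC.abs_nonneg a).isSelfAdjoint.star_eq] at h
    linear_combination (norm := noncomm_ring) -h
  have hd : w * (star w * w * CFC.abs a - CFC.abs a) = 0 :=
    hw.mul_eq_zero (cfcAbs_mul_eq_zero_iff.mp h)
  refine sub_eq_zero.mp (eq_zero_of_mul_cfcAbs_eq_zero (a := a) ?_ fun hy => ?_)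
  · linear_combination (norm := noncomm_ring) hd
  · rw [sub_mul, mul_assoc, mul_assoc, hw.mul_eq_zero hy]
    simp

theorem mul_self_eq_zero (hw : IsPolarFactor a w) (ha : a * a = 0) : w * w = 0 :=
  hw.mul_eq_zero (hw.mul_eq_zero_of_mul_eq_zero ha)

theorem commute (hw : IsPolarFactor a w) {b : A} (hab : Commute a b)
    (hab' : Commute a (star b)) : Commute w b := by
  have habs : Commute (CFC.abs a) b := hab.cfcAbs_left hab'
  refine sub_eq_zero.mp (eq_zero_of_mul_cfcAbs_eq_zero (a := a) ?_ fun {y} hy => ?_)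
  · rw [sub_mul, mul_assoc, ← habs.eq, ← mul_assoc, hw.mul_abs, mul_assoc, hw.mul_abs, hab.eq,
      sub_self]
  · rw [sub_mul, mul_assoc, mul_assoc, hw.mul_eq_zero hy, mul_zero, sub_zero]
    exact hw.mul_eq_zero (by rw [← mul_assoc, hab.eq, mul_assoc, hy, mul_zero])

end IsPolarFactor

variable {E : Type*} [NormedAddCommGroup E] [InnerProductSpace ℂ E] [CompleteSpace E]

theorem norm_cfcAbs_apply (a : E →L[ℂ] E) (x : E) : ‖CFC.abs a x‖ = ‖a x‖ := by
  have habs : star (CFC.abs a) * CFC.abs a = star a * a := by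
    rw [(CFC.abs_nonneg a).isSelfAdjoint.star_eq, CFC.abs_mul_abs]
  rw [← sq_eq_sq₀ (norm_nonneg _) (norm_nonneg _), apply_norm_sq_eq_inner_adjoint_left,
    apply_norm_sq_eq_inner_adjoint_left]
  exact congr(RCLike.re (inner ℂ ($habs x) x))

theorem exists_isPolarFactor (a : E →L[ℂ] E) : ∃ w : E →L[ℂ] E, IsPolarFactor a w := by
  let R := (CFC.abs a).range.topologicalClosure
  let k : E →L[ℂ] R := (CFC.abs a).codRestrict R fun x => subset_closure ⟨x, rfl⟩
  have hk : DenseRange k := by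
    intro y
    rw [closure_subtype, ← Set.range_comp]
    exact y.2
  have hnorm : ∃ C, ∀ x, ‖a x‖ ≤ C * ‖k x‖ :=
    ⟨1, fun x => by rw [one_mul]; exact (norm_cfcAbs_apply a x).ge⟩
  let w := ((a : E →ₗ[ℂ] E).extendOfNorm (k : E →ₗ[ℂ] R)) ∘L R.orthogonalProjectionOnto
  refine ⟨w, ?_, fun {y} hy => ?_⟩
  · ext x
    have hx : R.orthogonalProjectionOnto (CFC.abs a x) = k x :=
      R.orthogonalProjectionOnto_mem_subspace_eq_self (k x)
    change _ = (a : E →ₗ[ℂ] E) x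
    rw [← LinearMap.extendOfNorm_eq hk hnorm x]
    exact congrArg _ hx
  · ext x
    have hyx : CFC.abs a (y x) = 0 := by
      rw [← norm_eq_zero, norm_cfcAbs_apply]
      simpa using congr($hy x)
    have hproj : R.orthogonalProjectionOnto (y x) = 0 := by
      rw [Submodule.orthogonalProjectionOnto_eq_zero_iff, Submodule.orthogonal_closure,
        orthogonal_range, ← star_eq_adjoint, (CFC.abs_nonneg a).isSelfAdjoint.star_eq]
      exact hyx
    simp [w, hproj]

end Polar

section StarOrder

/-- Drazin's star order: `b` extends `a`. It is transitive and antisymmetric only on partial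
isometries, hence a plain relation rather than a `PartialOrder`. -/
structure StarLE {R : Type*} [Mul R] [Star R] (a b : R) : Prop where
  star_mul_eq : star a * b = star a * a
  mul_star_eq : b * star a = a * star a

variable {R : Type*} [NonUnitalRing R] [StarRing R] {a b c : R}

instance : Std.Refl (StarLE (R := R)) := ⟨fun _ => ⟨rfl, rfl⟩⟩

protected theorem StarLE.star (h : StarLE a b) : StarLE (star a) (star b) where
  star_mul_eq := by simpa only [star_mul, star_star] using congrArg star h.mul_star_eq
  mul_star_eq := by simpa only [star_mul, star_star] using congrArg star h.star_mul_eq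

namespace StarLE

theorem antisymm (ha : a * (star a * a) = a) (hb : b * (star b * b) = b) (hab : StarLE a b)
    (hba : StarLE b a) : a = b := by
  have h : star a * b = star b * b := by simpa only [star_star] using hba.star.mul_star_eq
  calc a = a * star a * a := by rw [mul_assoc, ha]
    _ = b * (star b * b) := by rw [← hab.mul_star_eq, mul_assoc, ← hab.star_mul_eq, h]
    _ = b := hb

theorem star_mul_eq_of_trans (ha : a * (star a * a) = a) (hab : StarLE a b) (hbc : StarLE b c) :
    star a * c = star a * a := by
  have h : star a * a * star b = star a := by
    have hab' := hab.star.star_mul_eq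
    rw [star_star] at hab'
    simpa only [star_mul, star_star, mul_assoc, hab'] using congrArg star ha
  calc star a * c = star a * a * (star b * c) := by rw [← mul_assoc, h]
    _ = star a * a := by rw [hbc.star_mul_eq, ← mul_assoc, h, hab.star_mul_eq]

theorem trans (ha : a * (star a * a) = a) (hab : StarLE a b) (hbc : StarLE b c) :
    StarLE a c where
  star_mul_eq := star_mul_eq_of_trans ha hab hbc
  mul_star_eq := by
    have ha' : star a * (star (star a) * star a) = star a := by
      simpa only [star_mul, star_star, mul_assoc] using congrArg star ha
    simpa only [star_mul, star_star] using
      congrArg star (star_mul_eq_of_trans ha' hab.star hbc.star)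

theorem mul_eq_zero (ha : a * (star a * a) = a) (hb : b * b = 0) (hab : StarLE a b) :
    a * b = 0 := by
  rw [← ha, ← hab.star_mul_eq, mul_assoc, mul_assoc, hb, mul_zero, mul_zero]

end StarLE

variable [TopologicalSpace R] [T2Space R]

theorem exists_forall_mem_closure_of_isChain {K c : Set R} (hK : IsCompact K) (hcK : c ⊆ K)
    (hc : ∀ a ∈ c, a * (star a * a) = a) (hchain : IsChain StarLE c) (hne : c.Nonempty) :
    ∃ w ∈ K, ∀ a ∈ c, w ∈ closure {b ∈ c | StarLE a b} := by
  have := hne.to_subtype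
  have hsub (a : c) : closure {b ∈ c | StarLE (a : R) b} ⊆ K :=
    closure_minimal ((Set.sep_subset _ _).trans hcK) hK.isClosed
  obtain ⟨w, hw⟩ := IsCompact.nonempty_iInter_of_directed_nonempty_isCompact_isClosed
    (fun a : c => closure {b ∈ c | StarLE (a : R) b})
    (fun a b => by
      obtain ⟨d, hd, had, hbd⟩ := hchain.directedOn a a.2 b b.2
      exact ⟨⟨d, hd⟩, closure_mono fun x hx => ⟨hx.1, had.trans (hc a a.2) hx.2⟩,
        closure_mono fun x hx => ⟨hx.1, hbd.trans (hc b b.2) hx.2⟩⟩)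
    (fun a => ⟨a, subset_closure ⟨a.2, refl_of StarLE (a : R)⟩⟩)
    (fun a => hK.of_isClosed_subset isClosed_closure (hsub a)) (fun a => isClosed_closure)
  rw [Set.mem_iInter] at hw
  exact ⟨w, hsub _ (hw (Classical.arbitrary c)), fun a ha => hw ⟨a, ha⟩⟩

variable [SeparatelyContinuousMul R] [ContinuousStar R]

theorem exists_starLE_upperBound_of_isChain {K c : Set R} (hK : IsCompact K) (hcK : c ⊆ K)
    (hc : ∀ a ∈ c, IsSqZeroPartialIsometry a) (hchain : IsChain StarLE c) (hne : c.Nonempty) :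
    ∃ w ∈ K, IsSqZeroPartialIsometry w ∧ ∀ a ∈ c, StarLE a w := by
  obtain ⟨w, hwK, hw⟩ := exists_forall_mem_closure_of_isChain hK hcK
    (fun a ha => (hc a ha).mul_star_mul_self) hchain hne
  have hle (a) (ha : a ∈ c) : StarLE a w :=
    ⟨closure_minimal (t := {b | star a * b = star a * a}) (fun b hb => hb.2.star_mul_eq)
        (isClosed_eq (continuous_const_mul _) continuous_const) (hw a ha),
      closure_minimal (t := {b | b * star a = a * star a}) (fun b hb => hb.2.mul_star_eq)
        (isClosed_eq (continuous_mul_const _) continuous_const) (hw a ha)⟩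
  have hzero (a) (ha : a ∈ c) : a * w = 0 :=
    closure_minimal (t := {b | a * b = 0})
      (fun b hb => hb.2.mul_eq_zero (hc a ha).mul_star_mul_self (hc b hb.1).mul_self)
      (isClosed_eq (continuous_const_mul _) continuous_const) (hw a ha)
  have hclosure : w ∈ closure c :=
    closure_mono (Set.sep_subset _ _) (hw _ hne.some_mem)
  refine ⟨w, hwK, ⟨?_, ?_⟩, hle⟩
  · exact closure_minimal (t := {a | a * w = 0}) hzero
      (isClosed_eq (continuous_mul_const _) continuous_const) hclosure
  · refine closure_minimal (t := {a | w * (star a * w) = a}) (fun a ha => ?_)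
      (isClosed_eq ?_ continuous_id) hclosure
    · change w * (star a * w) = a
      rw [(hle a ha).star_mul_eq, ← mul_assoc, (hle a ha).mul_star_eq, mul_assoc,
        (hc a ha).mul_star_mul_self]
    · exact (continuous_const_mul w).comp ((continuous_mul_const w).comp continuous_star)

theorem exists_maximal_starLE {K : Set R} (hK : IsCompact K) (h₀ : (0 : R) ∈ K) :
    ∃ w ∈ K, IsSqZeroPartialIsometry w ∧
      ∀ b ∈ K, IsSqZeroPartialIsometry b → StarLE w b → b = w := by
  let S := {a : R // a ∈ K ∧ IsSqZeroPartialIsometry a}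
  have : Nonempty S := ⟨0, h₀, by simp, by simp⟩
  obtain ⟨m, hm⟩ := exists_maximal_of_nonempty_chains_bounded
    (r := fun a b : S => StarLE (a : R) b)
    (fun c hc hne => by
      obtain ⟨w, hwK, hw, hub⟩ := exists_starLE_upperBound_of_isChain hK (c := Subtype.val '' c)
        (by rintro _ ⟨a, -, rfl⟩; exact a.2.1) (by rintro _ ⟨a, -, rfl⟩; exact a.2.2)
        (by
          rintro _ ⟨a, ha, rfl⟩ _ ⟨b, hb, rfl⟩ hab
          exact hc ha hb (ne_of_apply_ne _ hab))
        (hne.image _)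
      exact ⟨⟨w, hwK, hw⟩, fun a ha => hub a ⟨a, ha, rfl⟩⟩)
    (fun {a b c} hab hbc => hab.trans a.2.2.mul_star_mul_self hbc)
  exact ⟨m, m.2.1, m.2.2, fun b hbK hb hmb =>
    (hm ⟨b, hbK, hb⟩ hmb).antisymm hb.mul_star_mul_self m.2.2.mul_star_mul_self hmb⟩

end StarOrder

section WOT

open Filter Topology ContinuousLinearMapWOT

variable {E : Type*} [NormedAddCommGroup E] [InnerProductSpace ℂ E]

theorem exists_tendsto_inner_of_mem_ultrafilter {r : ℝ} {𝒰 : Ultrafilter (E →WOT[ℂ] E)}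
    (h𝒰 : ofCLM '' Metric.closedBall (0 : E →L[ℂ] E) r ∈ 𝒰) (x y : E) :
    ∃ c : ℂ, Tendsto (fun A : E →WOT[ℂ] E => inner ℂ (A x) y) 𝒰 (𝓝 c) ∧ ‖c‖ ≤ r * ‖x‖ * ‖y‖ := by
  have hbound : ∀ᶠ A : E →WOT[ℂ] E in (𝒰 : Filter (E →WOT[ℂ] E)),
      inner ℂ (A x) y ∈ Metric.closedBall (0 : ℂ) (r * ‖x‖ * ‖y‖) := by
    filter_upwards [h𝒰]
    rintro _ ⟨A, hA, rfl⟩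
    rw [mem_closedBall_zero_iff] at hA ⊢
    exact (norm_inner_le_norm _ _).trans (by gcongr; exact A.le_of_opNorm_le hA x)
  obtain ⟨c, hc, hlim⟩ := (isCompact_closedBall (0 : ℂ) (r * ‖x‖ * ‖y‖)).ultrafilter_le_nhds
    (𝒰.map fun A : E →WOT[ℂ] E => inner ℂ (A x) y) (le_principal_iff.mpr hbound)
  exact ⟨c, hlim, mem_closedBall_zero_iff.mp hc⟩

theorem isCompact_image_ofCLM_closedBall [CompleteSpace E] (r : ℝ) :
    IsCompact (ofCLM '' Metric.closedBall (0 : E →L[ℂ] E) r) := by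
  refine isCompact_iff_ultrafilter_le_nhds'.mpr fun 𝒰 h𝒰 => ?_
  have hr : 0 ≤ r := by
    obtain ⟨_, A, hA, -⟩ := 𝒰.nonempty_of_mem h𝒰
    exact (norm_nonneg A).trans (mem_closedBall_zero_iff.mp hA)
  choose B hB hBr using exists_tendsto_inner_of_mem_ultrafilter h𝒰
  let B' : E →L⋆[ℂ] E →L[ℂ] ℂ := LinearMap.mkContinuous₂
    (LinearMap.mk₂'ₛₗ (starRingEnd ℂ) (RingHom.id ℂ) B
      (fun x x' y => tendsto_nhds_unique (hB _ _) (by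
        simpa [inner_add_left] using (hB x y).add (hB x' y)))
      (fun c x y => tendsto_nhds_unique (hB _ _) (by
        simpa [inner_smul_left, mul_comm] using (hB x y).const_mul ((starRingEnd ℂ) c)))
      (fun x y y' => tendsto_nhds_unique (hB _ _) (by
        simpa [inner_add_right] using (hB x y).add (hB x y')))
      (fun c x y => tendsto_nhds_unique (hB _ _) (by
        simpa [inner_smul_right] using (hB x y).const_mul c)))
    r hBr
  let L := InnerProductSpace.continuousLinearMapOfBilin B'
  have hL (x y : E) : inner ℂ (L x) y = B x y :=
    InnerProductSpace.continuousLinearMapOfBilin_apply B' x y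
  refine ⟨ofCLM L, ⟨L, mem_closedBall_zero_iff.mpr ?_, rfl⟩, ?_⟩
  · refine L.opNorm_le_of_re_inner_le hr fun x y hx hy => ?_
    have h : (inner ℂ (L x) y).re ≤ r * ‖x‖ * ‖y‖ :=
      (Complex.re_le_norm _).trans (hL x y ▸ hBr x y)
    rwa [hx, hy, mul_one, mul_one] at h
  · refine le_nhds_iff_forall_inner_apply_le_nhds.mpr fun x y => ?_
    have h := (hB x y).star
    simp only [← hL x y, RCLike.star_def, inner_conj_symm] at h
    exact h

end WOT

section TripleHom

/-- Triple homomorphisms on the corner `eD`, encoded as additive maps on `D` that factor through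
`x ↦ ex`. By polarization it is enough to preserve `x y* x`. -/
structure IsCornerTripleHom {D R : Type*} [NonUnitalRing D] [StarRing D] [NonUnitalRing R]
    [StarRing R] (e : D) (φ : D →+ R) : Prop where
  map_corner (x : D) : φ (e * x) = φ x
  map_quadratic (x y : D) : φ (x * star y * (e * x)) = φ x * star (φ y) * φ x

/-- The left factor `A` in `φ (wx) = Aφ(x) + φ(x)B`, for `φ` a triple homomorphism on `eD` and `w` a
halving of `e`. -/
def leftShift {D R : Type*} [NonUnitalRing D] [StarRing D] [NonUnitalRing R] [StarRing R]
    (φ : D →+ R) (w : D) : R :=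
  φ (w * star w) * star (φ (star w))

/-- The right factor `B` in `φ (wx) = Aφ(x) + φ(x)B`. -/
def rightShift {D R : Type*} [NonUnitalRing D] [StarRing D] [NonUnitalRing R] [StarRing R]
    (φ : D →+ R) (w : D) : R :=
  star (φ (star w)) * φ (w * star w)

namespace IsCornerTripleHom

variable {D R : Type*} [NonUnitalRing D] [StarRing D] [NonUnitalRing R] [StarRing R]
  {e w : D} {φ : D →+ R}

protected theorem op (hφ : IsCornerTripleHom e φ) :
    IsCornerTripleHom e ((MulOpposite.opAddEquiv : R ≃+ Rᵐᵒᵖ).toAddMonoidHom.comp φ) where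
  map_corner x := congrArg MulOpposite.op (hφ.map_corner x)
  map_quadratic x y := by
    refine (congrArg MulOpposite.op (hφ.map_quadratic x y)).trans ?_
    simp [mul_assoc]

theorem map_jordan (hφ : IsCornerTripleHom e φ) (x y z : D) :
    φ (x * star y * (e * z)) + φ (z * star y * (e * x)) =
      φ x * star (φ y) * φ z + φ z * star (φ y) * φ x := by
  have h := hφ.map_quadratic (x + z) y
  simp only [mul_add, add_mul, map_add] at h
  linear_combination (norm := noncomm_ring) h - hφ.map_quadratic x y - hφ.map_quadratic z y

theorem map_quadratic_of_mem (hφ : IsCornerTripleHom e φ) (he : IsSelfAdjoint e) (x : D) {y : D}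
    (hy : e * y = y) : φ (x * (star y * x)) = φ x * star (φ y) * φ x := by
  have hy' : star y * e = star y := by simpa [he.star_eq] using congrArg star hy
  rw [← hφ.map_quadratic, mul_assoc, ← mul_assoc (star y), hy']

theorem map_jordan_of_mem (hφ : IsCornerTripleHom e φ) (he : IsSelfAdjoint e) (x z : D) {y : D}
    (hy : e * y = y) : φ (x * (star y * z)) + φ (z * (star y * x)) =
      φ x * star (φ y) * φ z + φ z * star (φ y) * φ x := by
  have hy' : star y * e = star y := by simpa [he.star_eq] using congrArg star hy
  rw [← hφ.map_jordan, mul_assoc, ← mul_assoc _ e, mul_assoc z, ← mul_assoc _ e x, hy']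

variable (hφ : IsCornerTripleHom e φ) (hw : IsHalving e w)
include hφ hw

theorem map_mul_star_jordan :
    φ (w * star w) * star (φ (w * star w)) * φ w +
      φ w * star (φ (w * star w)) * φ (w * star w) = φ w := by
  rw [← hφ.map_jordan_of_mem hw.isSelfAdjoint _ _ (hw.left_mul_mul _)]
  simp [mul_assoc, hw.1]

theorem map_star_mul_jordan :
    φ (star w * w) * star (φ (star w * w)) * φ w +
      φ w * star (φ (star w * w)) * φ (star w * w) = φ w := by
  rw [← hφ.map_jordan_of_mem hw.isSelfAdjoint _ _ (hw.star.left_mul_mul _)]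
  simp [mul_assoc, hw.1]

theorem map_star_eq :
    φ (w * star w) * star (φ w) * φ (star w * w) +
      φ (star w * w) * star (φ w) * φ (w * star w) = φ (star w) := by
  rw [← hφ.map_jordan_of_mem hw.isSelfAdjoint _ _ hw.left_mul]
  simp [mul_assoc, hw.1, hw.star.1]

theorem map_mul_star_mul_star_map :
    φ (w * star w) * star (φ (star w * w)) = 0 := by
  have hF : φ (w * star w) * star (φ (w * star w)) * φ (w * star w) = φ (w * star w) := by
    rw [← hφ.map_quadratic_of_mem hw.isSelfAdjoint _ (hw.left_mul_mul _)]
    simp [mul_assoc, hw.1]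
  have hFGF : φ (w * star w) * star (φ (star w * w)) * φ (w * star w) = 0 := by
    rw [← hφ.map_quadratic_of_mem hw.isSelfAdjoint _ (hw.star.left_mul_mul _)]
    simp [mul_assoc, hw.1]
  have hFFG : φ (w * star w) * star (φ (w * star w)) * φ (star w * w) +
      φ (star w * w) * star (φ (w * star w)) * φ (w * star w) = 0 := by
    rw [← hφ.map_jordan_of_mem hw.isSelfAdjoint _ _ (hw.left_mul_mul _)]
    simp [mul_assoc, hw.1, hw.star.1]
  generalize φ (w * star w) = F at *
  generalize φ (star w * w) = G at *
  have h := congrArg star hFFG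
  have h2 := congrArg star hF
  simp only [star_mul, star_add, star_star, star_zero] at h h2
  linear_combination (norm := noncomm_ring) - hF * star G + F * h - hFGF * star F

theorem leftShift_eq : leftShift φ w = φ w * star (φ (star w * w)) := by
  have hU := congrArg star (hφ.map_star_eq hw)
  have hV := hφ.map_mul_star_jordan hw
  have hFG := hφ.map_mul_star_mul_star_map hw
  rw [leftShift]
  generalize φ (w * star w) = F at *
  generalize φ (star w * w) = G at *
  simp only [star_mul, star_add, star_star] at hU
  linear_combination (norm := noncomm_ring)
    -F * hU + hFG * φ w * star F + hV * star G - φ w * star F * hFG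

theorem leftShift_star : leftShift φ (star w) = star (leftShift φ w) := by
  rw [hφ.leftShift_eq hw, leftShift]
  simp

theorem isSqZeroPartialIsometry_leftShift : IsSqZeroPartialIsometry (leftShift φ w) where
  mul_self := by
    have hFUF : φ (w * star w) * star (φ (star w)) * φ (w * star w) = 0 := by
      rw [← hφ.map_quadratic_of_mem hw.isSelfAdjoint _ hw.star.left_mul]
      simp [hw.1]
    rw [leftShift, ← mul_assoc, hFUF, zero_mul]
  mul_star_mul_self := by
    have hV : φ w * star (φ w) * φ w = φ w := by
      rw [← hφ.map_quadratic_of_mem hw.isSelfAdjoint _ hw.left_mul, hw.mul_star_mul_self]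
    have hGVG : φ (star w * w) * star (φ w) * φ (star w * w) = 0 := by
      rw [← hφ.map_quadratic_of_mem hw.isSelfAdjoint _ hw.left_mul]
      simp [hw.star.1]
    have hGVG' := congrArg star hGVG
    have hGV := hφ.map_star_mul_jordan hw
    rw [hφ.leftShift_eq hw]
    generalize φ (star w * w) = G at *
    simp only [star_mul, star_star, star_zero] at hGVG' ⊢
    linear_combination (norm := noncomm_ring) hGV * star (φ w) * φ w * star G + hV * star G
      - G * star G * hV * star G - G * hGVG'

theorem map_mul (x : D) : φ (w * x) = leftShift φ w * φ x + φ x * rightShift φ w := by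
  rw [leftShift, rightShift, ← mul_assoc (φ x),
    ← hφ.map_jordan_of_mem hw.isSelfAdjoint _ _ hw.star.left_mul]
  simp [mul_assoc, hw.1]

theorem leftShift_mul_map_mul_rightShift (x : D) : leftShift φ w * φ x * rightShift φ w = 0 := by
  have hU : φ (star w * (star x * star w)) = φ (star w) * star (φ x) * φ (star w) := by
    rw [← hφ.map_quadratic, hw.star.left_mul, mul_assoc]
  have hF := hφ.map_quadratic_of_mem hw.isSelfAdjoint (w * star w)
    (hw.star.left_mul_mul (star x * star w))
  rw [hU] at hF
  simp only [star_mul, star_star, mul_assoc, hw.1.mul_self_mul, mul_zero, map_zero] at hF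
  simp only [leftShift, rightShift, mul_assoc, ← hF]

theorem isSqZeroPartialIsometry_rightShift : IsSqZeroPartialIsometry (rightShift φ w) :=
  (hφ.op.isSqZeroPartialIsometry_leftShift hw).unop

theorem rightShift_star : rightShift φ (star w) = star (rightShift φ w) :=
  congrArg MulOpposite.unop (hφ.op.leftShift_star hw)

theorem map_star_mul (x : D) :
    φ (star w * x) = star (leftShift φ w) * φ x + φ x * star (rightShift φ w) := by
  rw [hφ.map_mul hw.star, hφ.leftShift_star hw, hφ.rightShift_star hw]

theorem leftShift_mul_map_mul_star_rightShift (x : D) :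
    leftShift φ w * φ x * star (rightShift φ w) = 0 := by
  have hA := hφ.isSqZeroPartialIsometry_leftShift hw
  have ha := hφ.isSqZeroPartialIsometry_rightShift hw
  have hAa := hφ.leftShift_mul_map_mul_rightShift hw x
  have hsandwich : φ (w * (star w * (w * x))) = φ (w * x) := by
    rw [hw.1.mul_star_mul_self_mul]
  have hcorner : φ (w * (star w * x)) + φ (star w * (w * x)) = φ x := by
    rw [← map_add, ← mul_assoc, ← mul_assoc, ← add_mul, hw.mul_star_add_star_mul, hφ.map_corner]
  simp only [hφ.map_mul hw, hφ.map_star_mul hw] at hsandwich hcorner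
  generalize leftShift φ w = A at *
  generalize rightShift φ w = a at *
  generalize φ x = X at *
  have h₁ : A * star A * X * a * star a + A * X * star a = 0 := by
    linear_combination (norm := noncomm_ring) hsandwich * star a
      - hA.mul_star_mul_self * X * star a - hA.mul_self * X * star a * star a
      - hAa * star a * star a - star A * hAa * star a - star A * X * ha.mul_self * star a
      - A * X * ha.star_mul_mul_star - X * ha.mul_star_mul_self * star a
  have h₂ : 2 • (A * star A * X * a * star a) + A * X * star a = 0 := by
    linear_combination (norm := noncomm_ring) A * hcorner * star a
      - hA.mul_self * star A * X * star a - 2 • (hA.mul_self * X * star a * star a)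
      - hA.mul_star_mul_self * X * star a - A * X * ha.star_mul_mul_star - hAa * star a * star a
  linear_combination (norm := noncomm_ring) 2 • h₁ - h₂

end IsCornerTripleHom

/-- The projection `P` for which `Pφ` is the homomorphic part of `φ`. -/
def leftSupport {D R : Type*} [NonUnitalRing D] [StarRing D] [NonUnitalRing R] [StarRing R]
    (φ : D →+ R) (w : D) : R :=
  leftShift φ w * star (leftShift φ w) + star (leftShift φ w) * leftShift φ w

/-- The projection `Q` for which `φQ` is the antihomomorphic part of `φ`. -/
def rightSupport {D R : Type*} [NonUnitalRing D] [StarRing D] [NonUnitalRing R] [StarRing R]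
    (φ : D →+ R) (w : D) : R :=
  star (rightShift φ w) * rightShift φ w + rightShift φ w * star (rightShift φ w)

theorem isSelfAdjoint_leftSupport {D R : Type*} [NonUnitalRing D] [StarRing D] [NonUnitalRing R]
    [StarRing R] (φ : D →+ R) (w : D) : IsSelfAdjoint (leftSupport φ w) :=
  (IsSelfAdjoint.mul_star_self _).add (.star_mul_self _)

theorem isSelfAdjoint_rightSupport {D R : Type*} [NonUnitalRing D] [StarRing D] [NonUnitalRing R]
    [StarRing R] (φ : D →+ R) (w : D) : IsSelfAdjoint (rightSupport φ w) :=
  (IsSelfAdjoint.star_mul_self _).add (.mul_star_self _)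

namespace IsCornerTripleHom

variable {D R : Type*} [NonUnitalRing D] [StarRing D] [NonUnitalRing R] [StarRing R]
  {e w : D} {φ : D →+ R}

theorem map_mul_star_mul_of_intertwines (hφ : IsCornerTripleHom e φ) (hw : IsHalving e w) {A : R}
    (hA : IsSqZeroPartialIsometry A) (hmul : ∀ x, φ (w * x) = A * φ x)
    (hstar : ∀ x, φ (star w * x) = star A * φ x) (x y z : D) :
    φ (w * (star w * x) * star y * (e * z)) = A * star A * φ x * star (φ y) * φ z := by
  have hoff (x y z : D) : φ (w * (star w * x) * star y * (star w * (w * z))) =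
      A * star A * φ x * star (φ y) * (star A * A * φ z) := by
    have h := congrArg (A * star A * ·)
      (hφ.map_jordan (w * (star w * x)) y (star w * (w * z)))
    simpa only [hw.left_mul_mul, hw.star.left_mul_mul, mul_assoc, hmul, hstar, mul_add,
      hA.mul_self_mul, hA.mul_star_mul_self_mul, hA.star.mul_self_mul, mul_zero, add_zero] using h
  have hdiag : φ (w * (star w * x) * star y * (w * (star w * z))) =
      A * star A * φ x * star (φ y) * (A * star A * φ z) := by
    have h := hoff x (star w * y) (star w * z)
    simp only [star_mul, star_star, mul_assoc, hstar, hw.1.mul_star_mul_self_mul] at h ⊢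
    simpa [hA] using h
  have hz : A * (star A * φ z) + star A * (A * φ z) = φ z := by
    rw [← hmul, ← hstar, ← hstar, ← hmul, ← map_add, hw.mul_add_mul, hφ.map_corner]
  rw [← hw.mul_add_mul z, mul_add, map_add, hdiag, hoff]
  linear_combination (norm := noncomm_ring) A * star A * φ x * star (φ y) * hz

theorem map_mul_of_intertwines (hφ : IsCornerTripleHom e φ) (hw : IsHalving e w) {A : R}
    (hA : IsSqZeroPartialIsometry A) (hmul : ∀ x, φ (w * x) = A * φ x)
    (hstar : ∀ x, φ (star w * x) = star A * φ x) (x y z : D) :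
    φ (x * star y * (e * z)) = φ x * star (φ y) * φ z := by
  have h₁ := hφ.map_mul_star_mul_of_intertwines hw hA hmul hstar x y z
  have h₂ := hφ.map_mul_star_mul_of_intertwines hw.star hA.star hstar
    (by simpa only [star_star] using hmul) x y z
  have hx : A * (star A * φ x) + star A * (A * φ x) = φ x := by
    rw [← hmul, ← hstar, ← hstar, ← hmul, ← map_add, hw.mul_add_mul, hφ.map_corner]
  rw [star_star, star_star] at h₂
  rw [← hφ.map_corner, mul_assoc x, ← hw.mul_add_mul, map_add]
  simp only [mul_assoc] at h₁ h₂ ⊢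
  rw [h₁, h₂]
  linear_combination (norm := noncomm_ring) hx * star (φ y) * φ z

variable (hφ : IsCornerTripleHom e φ) (hw : IsHalving e w)
include hφ hw

theorem star_leftShift_mul_map_mul_rightShift (x : D) :
    star (leftShift φ w) * φ x * rightShift φ w = 0 := by
  simpa only [hφ.leftShift_star hw, hφ.rightShift_star hw, star_star] using
    hφ.leftShift_mul_map_mul_star_rightShift hw.star x

theorem leftSupport_mul_map_mul_rightShift (x : D) :
    leftSupport φ w * φ x * rightShift φ w = 0 := by
  rw [leftSupport]
  linear_combination (norm := noncomm_ring)
    leftShift φ w * hφ.star_leftShift_mul_map_mul_rightShift hw x +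
      star (leftShift φ w) * hφ.leftShift_mul_map_mul_rightShift hw x

theorem leftSupport_star : leftSupport φ (star w) = leftSupport φ w := by
  rw [leftSupport, leftSupport, hφ.leftShift_star hw, star_star, add_comm]

theorem leftSupport_mul_map_mul_star_rightShift (x : D) :
    leftSupport φ w * φ x * star (rightShift φ w) = 0 := by
  simpa only [hφ.leftSupport_star hw, hφ.rightShift_star hw] using
    hφ.leftSupport_mul_map_mul_rightShift hw.star x

theorem leftSupport_mul_map_mul_rightSupport (x : D) :
    leftSupport φ w * φ x * rightSupport φ w = 0 := by
  rw [rightSupport, mul_add, ← mul_assoc, ← mul_assoc,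
    hφ.leftSupport_mul_map_mul_star_rightShift hw, hφ.leftSupport_mul_map_mul_rightShift hw,
    zero_mul, zero_mul, add_zero]

theorem leftSupport_mul_map_add_map_mul_rightSupport (x : D) :
    leftSupport φ w * φ x + φ x * rightSupport φ w = φ x := by
  have hcorner : φ (w * (star w * x)) + φ (star w * (w * x)) = φ x := by
    rw [← map_add, hw.mul_add_mul, hφ.map_corner]
  simp only [hφ.map_mul hw, hφ.map_star_mul hw] at hcorner
  rw [leftSupport, rightSupport]
  linear_combination (norm := noncomm_ring) hcorner
    - 2 • hφ.leftShift_mul_map_mul_star_rightShift hw x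
    - 2 • hφ.star_leftShift_mul_map_mul_rightShift hw x

theorem leftSupport_mul_self_mul (x : R) :
    leftSupport φ w * (leftSupport φ w * x) = leftSupport φ w * x := by
  have hA := hφ.isSqZeroPartialIsometry_leftShift hw
  simp [leftSupport, add_mul, mul_add, mul_assoc, hA, hA.star]

theorem leftSupport_mul_map_mul (x : D) :
    leftSupport φ w * φ (w * x) = leftShift φ w * (leftSupport φ w * φ x) := by
  have hA := hφ.isSqZeroPartialIsometry_leftShift hw
  rw [hφ.map_mul hw, mul_add, ← mul_assoc _ (φ x), hφ.leftSupport_mul_map_mul_rightShift hw]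
  simp [leftSupport, add_mul, mul_add, mul_assoc, hA]

theorem leftSupport_mul_map_star_mul (x : D) :
    leftSupport φ w * φ (star w * x) = star (leftShift φ w) * (leftSupport φ w * φ x) := by
  simpa only [hφ.leftSupport_star hw, hφ.leftShift_star hw] using
    hφ.leftSupport_mul_map_mul hw.star x

theorem leftPart :
    IsCornerTripleHom e ((AddMonoidHom.mulLeft (leftSupport φ w)).comp φ) where
  map_corner x := by
    simp only [AddMonoidHom.comp_apply, AddMonoidHom.coe_mulLeft, hφ.map_corner]
  map_quadratic x y := by
    have hx := hφ.leftSupport_mul_map_add_map_mul_rightSupport hw x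
    have h := hφ.leftSupport_mul_map_mul_rightSupport hw (x * star y * (e * x))
    have hP := (isSelfAdjoint_leftSupport φ w).star_eq
    simp only [AddMonoidHom.comp_apply, AddMonoidHom.coe_mulLeft, star_mul, hP,
      hφ.map_quadratic] at h ⊢
    have hPP := hφ.leftSupport_mul_self_mul hw (φ x)
    linear_combination (norm := noncomm_ring) leftSupport φ w * φ x * star (φ y) * (-hx-hPP) + h

theorem leftSupport_mul_map_triple (x y z : D) :
    leftSupport φ w * φ (x * star y * (e * z)) =
      leftSupport φ w * φ x * star (leftSupport φ w * φ y) * (leftSupport φ w * φ z) :=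
  (hφ.leftPart hw).map_mul_of_intertwines hw (hφ.isSqZeroPartialIsometry_leftShift hw)
    (hφ.leftSupport_mul_map_mul hw) (hφ.leftSupport_mul_map_star_mul hw) x y z

theorem map_triple_mul_rightSupport (x y z : D) :
    φ (z * star y * (e * x)) * rightSupport φ w =
      φ x * rightSupport φ w * star (φ y * rightSupport φ w) * (φ z * rightSupport φ w) :=
  (congrArg MulOpposite.unop (hφ.op.leftSupport_mul_map_triple hw z y x)).trans
    (mul_assoc _ _ _).symm

theorem map_triple_add_map_triple (x x' y y' z z' : D) :
    leftSupport φ w * φ (x * star y * (e * z)) + φ (z' * star y' * (e * x')) * rightSupport φ w =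
      (leftSupport φ w * φ x + φ x' * rightSupport φ w) *
        star (leftSupport φ w * φ y + φ y' * rightSupport φ w) *
        (leftSupport φ w * φ z + φ z' * rightSupport φ w) := by
  have horth := hφ.leftSupport_mul_map_mul_rightSupport hw
  have horth' (y : D) : rightSupport φ w * star (φ y) * leftSupport φ w = 0 := by
    simpa [(isSelfAdjoint_leftSupport φ w).star_eq, (isSelfAdjoint_rightSupport φ w).star_eq,
      mul_assoc] using congrArg star (horth y)
  rw [hφ.leftSupport_mul_map_triple hw, hφ.map_triple_mul_rightSupport hw]
  simp only [star_mul, star_add, (isSelfAdjoint_leftSupport φ w).star_eq,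
    (isSelfAdjoint_rightSupport φ w).star_eq]
  generalize leftSupport φ w = P at *
  generalize rightSupport φ w = Q at *
  linear_combination (norm := noncomm_ring)
    - P * φ x * star (φ y) * horth z' - horth x * star (φ y') * (P * φ z + φ z' * Q)
    - φ x' * horth' y * (P * φ z + φ z' * Q) - φ x' * Q * horth' y' * φ z

end IsCornerTripleHom

end TripleHom

section VonNeumann

open ContinuousLinearMapWOT

section

variable {E : Type*} [NormedAddCommGroup E] [InnerProductSpace ℂ E] [CompleteSpace E]

theorem isClosed_image_ofCLM (W : VonNeumannAlgebra E) :
    IsClosed (ofCLM '' (W : Set (E →L[ℂ] E))) := by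
  have h : ofCLM '' (W : Set (E →L[ℂ] E)) = Set.centralizer (ofCLM '' (W.commutant : Set _)) := by
    ext x
    obtain ⟨x, rfl⟩ := ofCLM_surjective x
    rw [ofCLM_injective.mem_set_image, SetLike.mem_coe]
    nth_rw 1 [← W.commutant_commutant]
    simp only [SetLike.mem_coe, VonNeumannAlgebra.mem_commutant_iff (S := W.commutant),
      Set.mem_centralizer_iff, Set.forall_mem_image, ← ofCLM_mul, ofCLM_injective.eq_iff]
  rw [h]
  exact Set.isClosed_centralizer _

theorem IsPolarFactor.mem_vonNeumannAlgebra {W : VonNeumannAlgebra E} {a u : E →L[ℂ] E}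
    (hu : IsPolarFactor a u) (ha : a ∈ W) : u ∈ W := by
  have hcomm {b} (hb : b ∈ W.commutant) : Commute a b :=
    VonNeumannAlgebra.mem_commutant_iff.mp hb a ha
  rw [← W.commutant_commutant, VonNeumannAlgebra.mem_commutant_iff]
  exact fun b hb => (hu.commute (hcomm hb) (hcomm (star_mem hb))).eq.symm

/-- The reduced algebra `qWq`, encoded as the elements of `W` fixed by `q` on both sides. -/
def reducedSubalgebra (W : VonNeumannAlgebra E) {q : E →L[ℂ] E} (hq : IsSelfAdjoint q) :
    NonUnitalStarSubalgebra ℂ (E →L[ℂ] E) where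
  carrier := {x | x ∈ W ∧ q * x = x ∧ x * q = x}
  add_mem' := fun ⟨hx, hqx, hxq⟩ ⟨hy, hqy, hyq⟩ =>
    ⟨add_mem hx hy, by rw [mul_add, hqx, hqy], by rw [add_mul, hxq, hyq]⟩
  zero_mem' := ⟨zero_mem W, mul_zero q, zero_mul q⟩
  mul_mem' := fun ⟨hx, hqx, _⟩ ⟨hy, _, hyq⟩ =>
    ⟨mul_mem hx hy, by rw [← mul_assoc, hqx], by rw [mul_assoc, hyq]⟩
  smul_mem' c _ := fun ⟨hx, hqx, hxq⟩ =>
    ⟨W.toStarSubalgebra.smul_mem hx c, by rw [mul_smul_comm, hqx], by rw [smul_mul_assoc, hxq]⟩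
  star_mem' := fun ⟨hx, hqx, hxq⟩ =>
    ⟨star_mem hx, by simpa [hq.star_eq] using congrArg star hxq,
      by simpa [hq.star_eq] using congrArg star hqx⟩

theorem mem_reducedSubalgebra {W : VonNeumannAlgebra E} {q : E →L[ℂ] E} {hq : IsSelfAdjoint q}
    {x : E →L[ℂ] E} : x ∈ reducedSubalgebra W hq ↔ x ∈ W ∧ q * x = x ∧ x * q = x :=
  Iff.rfl

theorem isClosed_image_ofCLM_reducedSubalgebra (W : VonNeumannAlgebra E) {q : E →L[ℂ] E}
    (hq : IsSelfAdjoint q) : IsClosed (ofCLM '' (reducedSubalgebra W hq : Set (E →L[ℂ] E))) := by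
  have h : ofCLM '' (reducedSubalgebra W hq : Set (E →L[ℂ] E)) =
      ofCLM '' (W : Set (E →L[ℂ] E)) ∩ ({x | ofCLM q * x = x} ∩ {x | x * ofCLM q = x}) := by
    ext x
    obtain ⟨x, rfl⟩ := ofCLM_surjective x
    simp [ofCLM_injective.mem_set_image, mem_reducedSubalgebra, ofCLM_injective.eq_iff]
  rw [h]
  exact (isClosed_image_ofCLM W).inter ((isClosed_eq (continuous_const_mul _) continuous_id).inter
    (isClosed_eq (continuous_mul_const _) continuous_id))

theorem isClosed_reducedSubalgebra (W : VonNeumannAlgebra E) {q : E →L[ℂ] E}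
    (hq : IsSelfAdjoint q) : IsClosed (reducedSubalgebra W hq : Set (E →L[ℂ] E)) := by
  rw [← Set.preimage_image_eq (reducedSubalgebra W hq : Set (E →L[ℂ] E)) ofCLM_injective]
  exact (isClosed_image_ofCLM_reducedSubalgebra W hq).preimage continuous_ofCLM

theorem exists_maximal_mem_reducedSubalgebra (W : VonNeumannAlgebra E) {e : E →L[ℂ] E}
    (he : IsSelfAdjoint e) : ∃ w ∈ reducedSubalgebra W he, IsSqZeroPartialIsometry w ∧
      ∀ b ∈ reducedSubalgebra W he, IsSqZeroPartialIsometry b → StarLE w b → b = w := by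
  have hK : IsCompact (ofCLM '' ((reducedSubalgebra W he : Set (E →L[ℂ] E)) ∩
      Metric.closedBall 0 1)) := by
    rw [Set.image_inter ofCLM_injective]
    exact (isCompact_image_ofCLM_closedBall 1).inter_left
      (isClosed_image_ofCLM_reducedSubalgebra W he)
  obtain ⟨_, ⟨w, ⟨hwe, -⟩, rfl⟩, hw, hmax⟩ := exists_maximal_starLE hK
    ⟨0, ⟨zero_mem _, Metric.mem_closedBall_self zero_le_one⟩, rfl⟩
  refine ⟨w, hwe, ⟨ofCLM_injective hw.1, ofCLM_injective hw.2⟩, fun b hbe hb hwb => ?_⟩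
  exact ofCLM_injective (hmax _ ⟨b, ⟨hbe, mem_closedBall_zero_iff.mpr hb.norm_le_one⟩, rfl⟩
    ⟨congrArg ofCLM hb.1, congrArg ofCLM hb.2⟩
    ⟨congrArg ofCLM hwb.1, congrArg ofCLM hwb.2⟩)

end

theorem IsContinuousVNA.exists_mul_self_eq_zero {W : VonNeumannAlgebra H} (hW : IsContinuousVNA W)
    {q : H →L[ℂ] H} (hqW : q ∈ W) (hq : IsStarProjection q) (hq₀ : q ≠ 0) :
    ∃ a ∈ reducedSubalgebra W hq.isSelfAdjoint, a * a = 0 ∧ a ≠ 0 := by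
  have hqq : q * q = q := hq.isIdempotentElem
  by_contra! h
  have : IsClosed (reducedSubalgebra W hq.isSelfAdjoint : Set (H →L[ℂ] H)) :=
    isClosed_reducedSubalgebra W _
  have hqxq {x} (hx : x ∈ W) : q * x * q ∈ reducedSubalgebra W hq.isSelfAdjoint :=
    ⟨mul_mem (mul_mem hqW hx) hqW, by rw [mul_assoc q, ← mul_assoc q q, hqq],
      by rw [mul_assoc, hqq]⟩
  refine hq₀ (hW q hqW hq.isSelfAdjoint hqq fun x hx y hy => ?_)
  have hcomm := commute_of_forall_sq_eq_zero
    (fun a : reducedSubalgebra W hq.isSelfAdjoint => fun ha =>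
      Subtype.ext (h a a.2 (congrArg Subtype.val ha))) ⟨_, hqxq hx⟩ ⟨_, hqxq hy⟩
  exact congrArg Subtype.val hcomm.eq

theorem IsContinuousVNA.exists_isSqZeroPartialIsometry {W : VonNeumannAlgebra H}
    (hW : IsContinuousVNA W) {q : H →L[ℂ] H} (hqW : q ∈ W) (hq : IsStarProjection q)
    (hq₀ : q ≠ 0) :
    ∃ u ∈ reducedSubalgebra W hq.isSelfAdjoint, IsSqZeroPartialIsometry u ∧ u ≠ 0 := by
  obtain ⟨a, ⟨haW, hqa, haq⟩, haa, ha₀⟩ := hW.exists_mul_self_eq_zero hqW hq hq₀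
  obtain ⟨u, hu⟩ := exists_isPolarFactor a
  have hqu : (1 - q) * u = 0 :=
    hu.mul_eq_zero_of_mul_eq_zero (by rw [sub_mul, one_mul, hqa, sub_self])
  have huq : u * (1 - q) = 0 := hu.mul_eq_zero (by rw [mul_sub, mul_one, haq, sub_self])
  rw [sub_mul, one_mul, sub_eq_zero, eq_comm] at hqu
  rw [mul_sub, mul_one, sub_eq_zero, eq_comm] at huq
  exact ⟨u, ⟨hu.mem_vonNeumannAlgebra haW, hqu, huq⟩,
    ⟨hu.mul_self_eq_zero haa, hu.mul_star_mul_self⟩,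
    fun hu₀ => ha₀ (by rw [← hu.mul_abs, hu₀, zero_mul])⟩

theorem IsContinuousVNA.exists_isHalving {W : VonNeumannAlgebra H} (hW : IsContinuousVNA W)
    {e : H →L[ℂ] H} (heW : e ∈ W) (he : IsStarProjection e) : ∃ w ∈ W, IsHalving e w := by
  obtain ⟨w, hwe, hw, hmax⟩ := exists_maximal_mem_reducedSubalgebra W he.isSelfAdjoint
  let s := w * star w + star w * w
  have hse : s ∈ reducedSubalgebra W he.isSelfAdjoint :=
    add_mem (mul_mem hwe (star_mem hwe)) (mul_mem (star_mem hwe) hwe)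
  have hq : IsStarProjection (e - s) := hw.isStarProjection_support.sub_of_mul_eq_left he hse.2.2
  refine ⟨w, hwe.1, hw, ?_⟩
  by_contra hsne
  obtain ⟨u, hu, huPI, hu₀⟩ := hW.exists_isSqZeroPartialIsometry (sub_mem heW hse.1) hq
    (sub_ne_zero.mpr (Ne.symm hsne))
  have hwq : w * (e - s) = 0 := by simp [s, mul_sub, mul_add, hwe.2.2, hw]
  have hqw : (e - s) * w = 0 := by simp [s, sub_mul, add_mul, mul_assoc, hwe.2.1, hw]
  have hmul {x} (hx : x ∈ reducedSubalgebra W hq.isSelfAdjoint) : w * x = 0 ∧ x * w = 0 :=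
    ⟨by rw [← hx.2.1, ← mul_assoc, hwq, zero_mul], by rw [← hx.2.2, mul_assoc, hqw, mul_zero]⟩
  have hstar : star w * u = 0 := by simpa using congrArg star (hmul (star_mem hu)).2
  have hstar' : u * star w = 0 := by simpa using congrArg star (hmul (star_mem hu)).1
  have heq : e * (e - s) = e - s := by rw [mul_sub, he.isIdempotentElem, hse.2.1]
  have hqe : (e - s) * e = e - s := by rw [sub_mul, he.isIdempotentElem, hse.2.2]
  have hue : u ∈ reducedSubalgebra W he.isSelfAdjoint :=
    ⟨hu.1, by rw [← hu.2.1, ← mul_assoc, heq], by rw [← hu.2.2, mul_assoc, hqe]⟩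
  refine hu₀ (add_eq_left.mp (hmax (w + u) (add_mem hwe hue)
    (hw.add huPI (hmul hu).1 (hmul hu).2 hstar hstar') ⟨?_, ?_⟩))
  · rw [mul_add, hstar, add_zero]
  · rw [add_mul, hstar', add_zero]

end VonNeumann

section Transpose

theorem inner_conj_apply {E : Type*} [NormedAddCommGroup E] [InnerProductSpace ℂ E]
    (J : E ≃ₗᵢ⋆[ℂ] E) (x y : E) : inner ℂ (J x) (J y) = inner ℂ y x := by
  rw [← inner_conj_symm y x, inner_eq_sum_norm_sq_div_four (𝕜 := ℂ) (J x) (J y),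
    inner_eq_sum_norm_sq_div_four (𝕜 := ℂ) x y]
  have hsub : J x - Complex.I • J y = J (x + Complex.I • y) := by
    simp [map_smulₛₗ, sub_eq_add_neg]
  have hadd : J x + Complex.I • J y = J (x - Complex.I • y) := by
    simp [map_smulₛₗ, sub_eq_add_neg]
  simp only [RCLike.I_to_complex, ← map_add J, ← map_sub J, hsub, hadd,
    LinearIsometryEquiv.norm_map]
  simp only [map_div₀, map_add, map_sub, map_mul, map_pow, Complex.conj_I,
    Complex.coe_algebraMap, Complex.conj_ofReal, map_ofNat]
  ring

variable {J : H ≃ₗᵢ⋆[ℂ] H} (hJ : ∀ h : H, J (J h) = h)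
include hJ

theorem transp_mul (x y : H →L[ℂ] H) : transp J (x * y) = transp J y * transp J x := by
  ext h
  change J (adjoint (x * y) (J h)) = J (adjoint y (J (J (adjoint x (J h)))))
  rw [hJ, ← star_eq_adjoint, star_mul]
  rfl

theorem star_transp (x : H →L[ℂ] H) : star (transp J x) = transp J (star x) := by
  refine ((eq_adjoint_iff _ _).mpr fun u v => ?_).symm
  change inner ℂ (J (adjoint (adjoint x) (J u))) v = inner ℂ u (J (adjoint x (J v)))
  calc inner ℂ (J (adjoint (adjoint x) (J u))) v
      = inner ℂ (J (x (J u))) (J (J v)) := by rw [adjoint_adjoint, hJ]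
    _ = inner ℂ (adjoint x (J v)) (J u) := by rw [inner_conj_apply, adjoint_inner_left]
    _ = inner ℂ (J (J u)) (J (adjoint x (J v))) := (inner_conj_apply J _ _).symm
    _ = inner ℂ u (J (adjoint x (J v))) := by rw [hJ]

theorem transp_transp (x : H →L[ℂ] H) : transp J (transp J x) = x := by
  ext h
  change J (star (transp J x) (J h)) = x h
  rw [star_transp hJ]
  change J (J (adjoint (star x) (J (J h)))) = x h
  rw [hJ, hJ, star_eq_adjoint, adjoint_adjoint]

theorem transp_tri (x y z : H →L[ℂ] H) :
    transp J (tri x y z) = tri (transp J z) (transp J y) (transp J x) := by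
  change transp J (x * (star y * z)) = transp J z * (star (transp J y) * transp J x)
  rw [transp_mul hJ, transp_mul hJ, star_transp hJ, mul_assoc]

theorem transp_jtri (x y z : H →L[ℂ] H) :
    transp J (jtri x y z) = jtri (transp J x) (transp J y) (transp J z) := by
  change transpL J (jtri x y z) = _
  rw [jtri, map_smul, map_add]
  change (2 : ℂ)⁻¹ • (transp J (tri x y z) + transp J (tri z y x)) = _
  rw [transp_tri hJ, transp_tri hJ, add_comm, jtri]

theorem cornerT_eq_map (W : VonNeumannAlgebra H) (e : H →L[ℂ] H) :
    cornerT W e J = (corner W e).map (transpL J) := by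
  rw [cornerT, corner, ← Submodule.map_comp]
  congr 1
  exact LinearMap.ext fun x => (transp_mul hJ e x).symm

theorem envMap_mem_envTRO (W : VonNeumannAlgebra H) (e : H →L[ℂ] H) (x : corner W e) :
    envMap W e J x ∈ envTRO W e J :=
  ⟨x.2, cornerT_eq_map hJ W e ▸ Submodule.mem_map_of_mem x.2⟩

theorem envMap_jtri (W : VonNeumannAlgebra H) (e : H →L[ℂ] H) (x y z : corner W e)
    (h : jtri (x : H →L[ℂ] H) y z ∈ corner W e) :
    envMap W e J ⟨jtri (x : H →L[ℂ] H) y z, h⟩ =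
      (2 : ℂ)⁻¹ • (ptri (envMap W e J x) (envMap W e J y) (envMap W e J z) +
        ptri (envMap W e J z) (envMap W e J y) (envMap W e J x)) :=
  Prod.ext rfl (transp_jtri hJ x y z)

end Transpose

section Pairs

/-- The map `x ↦ ex` of `W` onto `eW`. -/
def leftMulCorner (W : VonNeumannAlgebra H) (e : W) : W →+ corner W (e : H →L[ℂ] H) where
  toFun x := ⟨e * x, x, x.2, rfl⟩
  map_zero' := Subtype.ext (mul_zero _)
  map_add' _ _ := Subtype.ext (mul_add _ _ _)

variable {W : VonNeumannAlgebra H} {e w : W} {J : H ≃ₗᵢ⋆[ℂ] H}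

theorem leftMulCorner_surjective (e : W) : Function.Surjective (leftMulCorner W e) := by
  rintro ⟨_, x, hx, rfl⟩
  exact ⟨⟨x, hx⟩, rfl⟩

theorem leftMulCorner_mul_left (he : IsStarProjection e) (x : W) :
    leftMulCorner W e (e * x) = leftMulCorner W e x := by
  have h : e * (e * x) = e * x := by rw [← mul_assoc, he.isIdempotentElem]
  exact Subtype.ext (congrArg Subtype.val h :)

theorem coe_leftMulCorner_triple (he : IsStarProjection e) (x y z : W) :
    (leftMulCorner W e (x * star y * (e * z)) : H →L[ℂ] H) =
      tri (leftMulCorner W e x : H →L[ℂ] H) (leftMulCorner W e y) (leftMulCorner W e z) := by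
  have h : e * (x * star y * (e * z)) = e * x * (star (e * y) * (e * z)) := by
    rw [star_mul, he.isSelfAdjoint.star_eq]
    simp only [mul_assoc]
    rw [← mul_assoc e e z, he.isIdempotentElem]
  exact congrArg Subtype.val h

/-- The element `(ex, (ex')ᵗ)` of `eW ⊕ Wᵗeᵗ`. -/
def envPair (J : H ≃ₗᵢ⋆[ℂ] H) (e x x' : W) : (H →L[ℂ] H) × (H →L[ℂ] H) :=
  (leftMulCorner W e x, transp J (leftMulCorner W e x'))

theorem envPair_add (e x x' y y' : W) :
    envPair J e (x + y) (x' + y') = envPair J e x x' + envPair J e y y' :=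
  Prod.ext (congrArg Subtype.val (map_add (leftMulCorner W e) x y)) <| by
    change transpL J (leftMulCorner W e (x' + y')) = _
    rw [map_add, Submodule.coe_add, map_add]
    rfl

theorem ptri_envPair (hJ : ∀ h : H, J (J h) = h) (he : IsStarProjection e) (x x' y y' z z' : W) :
    ptri (envPair J e x x') (envPair J e y y') (envPair J e z z') =
      envPair J e (x * star y * (e * z)) (z' * star y' * (e * x')) := by
  simp only [ptri, envPair, coe_leftMulCorner_triple he, transp_tri hJ]

theorem exists_envPair_eq (hJ : ∀ h : H, J (J h) = h) {a : (H →L[ℂ] H) × (H →L[ℂ] H)}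
    (ha : a ∈ envTRO W (e : H →L[ℂ] H) J) : ∃ x x' : W, envPair J e x x' = a := by
  obtain ⟨hfst, hsnd⟩ := Submodule.mem_prod.mp ha
  rw [cornerT_eq_map hJ] at hsnd
  obtain ⟨b, hb, hba⟩ := hsnd
  obtain ⟨x, hx⟩ := leftMulCorner_surjective e ⟨a.1, hfst⟩
  obtain ⟨x', hx'⟩ := leftMulCorner_surjective e ⟨b, hb⟩
  refine ⟨x, x', Prod.ext ?_ ?_⟩
  · rw [envPair, hx]
  · rw [envPair, hx']
    exact hba

theorem isHalving_coe_iff : IsHalving (e : H →L[ℂ] H) w ↔ IsHalving e w :=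
  ⟨fun h => ⟨⟨Subtype.ext h.1.1, Subtype.ext h.1.2⟩, Subtype.ext h.2⟩,
    fun h => ⟨⟨congrArg Subtype.val h.1.1, congrArg Subtype.val h.1.2⟩, congrArg Subtype.val h.2⟩⟩

variable {T : Submodule ℂ ((H →L[ℂ] H) × (H →L[ℂ] H))}
  (hT : ∀ a ∈ T, ∀ b ∈ T, ∀ c ∈ T, ptri a b c ∈ T)
  (hα : ∀ x, envMap W (e : H →L[ℂ] H) J x ∈ T)
include hT hα

theorem envPair_star_mul_zero_mem (hJ : ∀ h : H, J (J h) = h) (hw : IsHalving e w) (x : W) :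
    envPair J e (star w * x) 0 ∈ T := by
  have hmem (y : W) : envPair J e y y ∈ T := hα (leftMulCorner W e y)
  have hgw : star w * w * star w = star w := by rw [mul_assoc, hw.1.star_mul_mul_star]
  have hzero : x * star w * (e * (star w * w)) = 0 := by
    rw [hw.star.left_mul_mul, mul_assoc, hw.1.star.mul_self_mul, mul_zero]
  have h := hT _ (hmem (star w * w)) _ (hmem w) _ (hmem x)
  rw [ptri_envPair hJ hw.isStarProjection, hzero, hgw] at h
  have hwe : star w * (e * x) = star w * x := by
    rw [← mul_assoc]
    simpa [hw.isSelfAdjoint.star_eq] using congrArg (star · * x) hw.left_mul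
  rwa [hwe] at h

theorem envTRO_le (hJ : ∀ h : H, J (J h) = h) (hw : IsHalving e w) :
    envTRO W (e : H →L[ℂ] H) J ≤ T := by
  have hleft (x : W) : envPair J e x 0 ∈ T := by
    have h := T.add_mem (envPair_star_mul_zero_mem hT hα hJ hw.star (star w * x))
      (envPair_star_mul_zero_mem hT hα hJ hw (w * x))
    rwa [star_star, ← envPair_add, hw.mul_add_mul, add_zero, envPair, leftMulCorner_mul_left
      hw.isStarProjection] at h
  intro a ha
  obtain ⟨x, x', rfl⟩ := exists_envPair_eq hJ ha
  have hdiag : envPair J e x' x' ∈ T := hα (leftMulCorner W e x')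
  have h := T.add_mem (hleft (x - x')) hdiag
  rwa [← envPair_add, sub_add_cancel, zero_add] at h

end Pairs

section OffDiagonal

variable (K' H' : Type) [NormedAddCommGroup K'] [InnerProductSpace ℂ K'] [CompleteSpace K']
  [NormedAddCommGroup H'] [InnerProductSpace ℂ H'] [CompleteSpace H']

/-- The isometric inclusion of `K'` into the Hilbert space direct sum `K' ⊕ H'`. -/
def inclFst : K' →L[ℂ] WithLp 2 (K' × H') :=
  (WithLp.prodContinuousLinearEquiv 2 ℂ K' H').symm ∘L inl ℂ K' H'

/-- The isometric inclusion of `H'` into the Hilbert space direct sum `K' ⊕ H'`. -/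
def inclSnd : H' →L[ℂ] WithLp 2 (K' × H') :=
  (WithLp.prodContinuousLinearEquiv 2 ℂ K' H').symm ∘L inr ℂ K' H'

theorem adjoint_inclFst_comp_inclFst : adjoint (inclFst K' H') ∘L inclFst K' H' = 1 :=
  (norm_map_iff_adjoint_comp_self _).mp (WithLp.norm_toLp_fst 2 K' H')

theorem adjoint_inclSnd_comp_inclSnd : adjoint (inclSnd K' H') ∘L inclSnd K' H' = 1 :=
  (norm_map_iff_adjoint_comp_self _).mp (WithLp.norm_toLp_snd 2 K' H')

/-- The realization of `B(K', H')` as the off-diagonal corner of the C*-algebra `B(K' ⊕ H')`. -/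
def offDiagonal : (K' →L[ℂ] H') →ₗ[ℂ] (WithLp 2 (K' × H') →L[ℂ] WithLp 2 (K' × H')) where
  toFun x := inclSnd K' H' ∘L x ∘L adjoint (inclFst K' H')
  map_add' x y := by rw [add_comp, comp_add]
  map_smul' c x := by rw [smul_comp, comp_smul, RingHom.id_apply]

variable {K' H'}

theorem offDiagonal_injective : Function.Injective (offDiagonal K' H') := by
  refine Function.LeftInverse.injective
    (g := fun X => adjoint (inclSnd K' H') ∘L X ∘L inclFst K' H') fun x => ?_
  change adjoint (inclSnd K' H') ∘L (inclSnd K' H' ∘L x ∘L adjoint (inclFst K' H')) ∘L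
    inclFst K' H' = x
  rw [comp_assoc, comp_assoc, adjoint_inclFst_comp_inclFst, ← comp_assoc,
    adjoint_inclSnd_comp_inclSnd]
  rfl

theorem offDiagonal_tri (x y z : K' →L[ℂ] H') :
    offDiagonal K' H' (tri x y z) =
      offDiagonal K' H' x * star (offDiagonal K' H' y) * offDiagonal K' H' z := by
  have hstar : star (offDiagonal K' H' y) =
      inclFst K' H' ∘L adjoint y ∘L adjoint (inclSnd K' H') := by
    change adjoint (inclSnd K' H' ∘L y ∘L adjoint (inclFst K' H')) = _
    rw [adjoint_comp, adjoint_comp, adjoint_adjoint, comp_assoc]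
  have hfst (t : K') : adjoint (inclFst K' H') (inclFst K' H' t) = t :=
    DFunLike.congr_fun (adjoint_inclFst_comp_inclFst K' H') t
  have hsnd (t : H') : adjoint (inclSnd K' H') (inclSnd K' H' t) = t :=
    DFunLike.congr_fun (adjoint_inclSnd_comp_inclSnd K' H') t
  rw [hstar]
  ext t
  simp [offDiagonal, tri, hfst, hsnd]

end OffDiagonal

section Universal

variable {K' H' : Type} [NormedAddCommGroup K'] [InnerProductSpace ℂ K'] [CompleteSpace K']
  [NormedAddCommGroup H'] [InnerProductSpace ℂ H'] [CompleteSpace H']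

/-- Triple homomorphisms from a subspace of `B(H)` into `B(K', H')`; the Jordan triple product is
required to be preserved only where it stays in the subspace. -/
def IsTripleHom {E : Submodule ℂ (H →L[ℂ] H)} (π : E →ₗ[ℂ] (K' →L[ℂ] H')) : Prop :=
  ∀ (x y z : E) (h : jtri (x : H →L[ℂ] H) y z ∈ E),
    π ⟨jtri (x : H →L[ℂ] H) y z, h⟩ = jtri (π x) (π y) (π z)

theorem jtri_self (x y : K' →L[ℂ] H') : jtri x y x = tri x y x := by
  rw [jtri, ← two_smul ℂ, smul_smul, inv_mul_cancel₀ two_ne_zero, one_smul]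

theorem IsTripleHom.map_quadratic {E : Submodule ℂ (H →L[ℂ] H)} {π : E →ₗ[ℂ] (K' →L[ℂ] H')}
    (hπ : IsTripleHom π) (x y : E) (h : tri (x : H →L[ℂ] H) y x ∈ E) :
    π ⟨tri (x : H →L[ℂ] H) y x, h⟩ = tri (π x) (π y) (π x) := by
  simpa only [jtri_self] using hπ x y x (by rwa [jtri_self])

variable {W : VonNeumannAlgebra H}

/-- A linear map `π` on `eW`, pulled back to `W` along `x ↦ ex` and with values in the C*-algebra
`B(K' ⊕ H')`. -/
def cornerHom {e : W} (π : corner W (e : H →L[ℂ] H) →ₗ[ℂ] (K' →L[ℂ] H')) :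
    W →+ (WithLp 2 (K' × H') →L[ℂ] WithLp 2 (K' × H')) :=
  (offDiagonal K' H').toAddMonoidHom.comp (π.toAddMonoidHom.comp (leftMulCorner W e))

variable {e w : W} {π : corner W (e : H →L[ℂ] H) →ₗ[ℂ] (K' →L[ℂ] H')} {J : H ≃ₗᵢ⋆[ℂ] H}

theorem IsTripleHom.isCornerTripleHom (hπ : IsTripleHom π) (he : IsStarProjection e) :
    IsCornerTripleHom e (cornerHom π) where
  map_corner x := congrArg (fun b => offDiagonal K' H' (π b)) (leftMulCorner_mul_left he x)
  map_quadratic x y := by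
    have hcoe := coe_leftMulCorner_triple he x y x
    have hmap := hπ.map_quadratic (leftMulCorner W e x) (leftMulCorner W e y)
      (hcoe ▸ Subtype.property _)
    refine Eq.trans ?_ (offDiagonal_tri _ _ _)
    exact congrArg (offDiagonal K' H') ((congrArg π (Subtype.ext hcoe)).trans hmap)

/-- The map `z ↦ x y* z`. -/
def triRight (x y : K' →L[ℂ] H') : (K' →L[ℂ] H') →ₗ[ℂ] (K' →L[ℂ] H') :=
  (compL ℂ K' H' H' (x ∘L adjoint y)).toLinearMap

/-- Left multiplication by the projection onto the homomorphic part of `π`, written in terms of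
ternary products so that it preserves every TRO containing the range of `π`. -/
def leftCut (w : W) (π : corner W (e : H →L[ℂ] H) →ₗ[ℂ] (K' →L[ℂ] H')) :
    (K' →L[ℂ] H') →ₗ[ℂ] (K' →L[ℂ] H') :=
  let P (x : W) := π (leftMulCorner W e x)
  triRight (P (w * star w)) (P (star w)) ∘ₗ triRight (P (star w * w)) (P w) +
    triRight (P (star w * w)) (P w) ∘ₗ triRight (P (w * star w)) (P (star w))

theorem leftCut_mem {S : Submodule ℂ (K' →L[ℂ] H')} (hS : IsTRO S) (hπS : ∀ x, π x ∈ S)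
    {X : K' →L[ℂ] H'} (hX : X ∈ S) : leftCut w π X ∈ S :=
  have htri (x y) {Y} (hY : Y ∈ S) : triRight (π x) (π y) Y ∈ S :=
    hS.2 _ (hπS x) _ (hπS y) _ hY
  S.add_mem (htri _ _ (htri _ _ hX)) (htri _ _ (htri _ _ hX))

theorem offDiagonal_leftCut (hφ : IsCornerTripleHom e (cornerHom π)) (hw : IsHalving e w)
    (X : K' →L[ℂ] H') :
    offDiagonal K' H' (leftCut w π X) = leftSupport (cornerHom π) w * offDiagonal K' H' X := by
  have htri (x y : W) (Y : K' →L[ℂ] H') :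
      offDiagonal K' H' (triRight (π (leftMulCorner W e x)) (π (leftMulCorner W e y)) Y) =
        cornerHom π x * star (cornerHom π y) * offDiagonal K' H' Y :=
    offDiagonal_tri _ _ _
  rw [leftSupport, ← hφ.leftShift_star hw, leftShift, leftShift, star_star]
  simp only [leftCut, LinearMap.add_apply, LinearMap.comp_apply, map_add, htri]
  simp only [add_mul, mul_assoc]

/-- The map `(x, yᵗ) ↦ x` on `eW ⊕ Wᵗeᵗ`. -/
def envFst (W : VonNeumannAlgebra H) (e : H →L[ℂ] H) (J : H ≃ₗᵢ⋆[ℂ] H) :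
    envTRO W e J →ₗ[ℂ] corner W e :=
  (LinearMap.fst ℂ _ _).restrict fun _ ha => ha.1

theorem transp_mem_corner (hJ : ∀ h : H, J (J h) = h) {e b : H →L[ℂ] H} (hb : b ∈ cornerT W e J) :
    transp J b ∈ corner W e := by
  rw [cornerT_eq_map hJ] at hb
  obtain ⟨x, hx, rfl⟩ := hb
  exact (transp_transp hJ x).symm ▸ hx

/-- The map `(x, yᵗ) ↦ y` on `eW ⊕ Wᵗeᵗ`. -/
def envSnd (W : VonNeumannAlgebra H) (e : H →L[ℂ] H) (hJ : ∀ h : H, J (J h) = h) :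
    envTRO W e J →ₗ[ℂ] corner W e :=
  (transpL J ∘ₗ LinearMap.snd ℂ _ _).restrict fun _ ha => transp_mem_corner hJ ha.2

/-- The extension `(x, yᵗ) ↦ Pπ(x) + (π(y) - Pπ(y))` of `π` along `α`, where `P` is `leftCut`. -/
def envLift (hJ : ∀ h : H, J (J h) = h) (w : W)
    (π : corner W (e : H →L[ℂ] H) →ₗ[ℂ] (K' →L[ℂ] H')) :
    envTRO W (e : H →L[ℂ] H) J →ₗ[ℂ] (K' →L[ℂ] H') :=
  leftCut w π ∘ₗ π ∘ₗ envFst W e J + (π ∘ₗ envSnd W e hJ - leftCut w π ∘ₗ π ∘ₗ envSnd W e hJ)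

theorem envLift_mem (hJ : ∀ h : H, J (J h) = h) {S : Submodule ℂ (K' →L[ℂ] H')} (hS : IsTRO S)
    (hπS : ∀ x, π x ∈ S) (a : envTRO W (e : H →L[ℂ] H) J) : envLift hJ w π a ∈ S :=
  S.add_mem (leftCut_mem hS hπS (hπS _)) (S.sub_mem (hπS _) (leftCut_mem hS hπS (hπS _)))

theorem envLift_envMap (hJ : ∀ h : H, J (J h) = h) (x : corner W (e : H →L[ℂ] H))
    (hx : envMap W e J x ∈ envTRO W (e : H →L[ℂ] H) J) :
    envLift hJ w π ⟨envMap W e J x, hx⟩ = π x := by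
  have hfst : envFst W e J ⟨envMap W e J x, hx⟩ = x := rfl
  have hsnd : envSnd W e hJ ⟨envMap W e J x, hx⟩ = x := Subtype.ext (transp_transp hJ x)
  simp [envLift, hfst, hsnd]

theorem offDiagonal_envLift (hJ : ∀ h : H, J (J h) = h) (hφ : IsCornerTripleHom e (cornerHom π))
    (hw : IsHalving e w) (x x' : W) (h : envPair J e x x' ∈ envTRO W (e : H →L[ℂ] H) J) :
    offDiagonal K' H' (envLift hJ w π ⟨envPair J e x x', h⟩) =
      leftSupport (cornerHom π) w * cornerHom π x +
        cornerHom π x' * rightSupport (cornerHom π) w := by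
  have hfst : envFst W e J ⟨envPair J e x x', h⟩ = leftMulCorner W e x := rfl
  have hsnd : envSnd W e hJ ⟨envPair J e x x', h⟩ = leftMulCorner W e x' :=
    Subtype.ext (transp_transp hJ _)
  rw [eq_sub_of_add_eq' (hφ.leftSupport_mul_map_add_map_mul_rightSupport hw x')]
  simp only [envLift, LinearMap.add_apply, LinearMap.sub_apply, LinearMap.comp_apply, hfst, hsnd,
    map_add, map_sub, offDiagonal_leftCut hφ hw]
  rfl

theorem envLift_ptri (hJ : ∀ h : H, J (J h) = h) (hπ : IsTripleHom π) (hw : IsHalving e w)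
    (a b c : envTRO W (e : H →L[ℂ] H) J)
    (h : ptri (a : (H →L[ℂ] H) × (H →L[ℂ] H)) b c ∈ envTRO W (e : H →L[ℂ] H) J) :
    envLift hJ w π ⟨ptri (a : (H →L[ℂ] H) × (H →L[ℂ] H)) b c, h⟩ =
      tri (envLift hJ w π a) (envLift hJ w π b) (envLift hJ w π c) := by
  have hφ := hπ.isCornerTripleHom hw.isStarProjection
  obtain ⟨a, ha⟩ := a
  obtain ⟨b, hb⟩ := b
  obtain ⟨c, hc⟩ := c
  obtain ⟨x, x', rfl⟩ := exists_envPair_eq hJ ha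
  obtain ⟨y, y', rfl⟩ := exists_envPair_eq hJ hb
  obtain ⟨z, z', rfl⟩ := exists_envPair_eq hJ hc
  apply offDiagonal_injective
  simp only [ptri_envPair hJ hw.isStarProjection, offDiagonal_tri, offDiagonal_envLift hJ hφ hw,
    hφ.map_triple_add_map_triple hw]

end Universal

/-- for a continuous von Neumann algebra `W`, a projection `e ∈ W` and a
conjugation `J` on `H`, the TRO `eW ⊕ W^t e^t` together with `α x = (x, x^t)` is a universal
enveloping TRO of the JC*-triple `eW`; that is, `T*(eW) = eW ⊕ W^t e^t`. -/
theorem universal_tro_of_corner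
    (W : VonNeumannAlgebra H) (hW : IsContinuousVNA W)
    (e : H →L[ℂ] H) (he : e ∈ W) (heSA : IsSelfAdjoint e) (heIdem : e * e = e)
    (J : H ≃ₗᵢ⋆[ℂ] H) (hJ : ∀ h : H, J (J h) = h) :
    -- `α` maps `eW` into `eW ⊕ W^t e^t` and is an injective triple homomorphism:
    (∀ x, envMap W e J x ∈ envTRO W e J) ∧
    Function.Injective (envMap W e J) ∧
    (∀ (x y z : ↥(corner W e)) (h : jtri (x : H →L[ℂ] H) y z ∈ corner W e),
      envMap W e J ⟨jtri (x : H →L[ℂ] H) y z, h⟩ =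
        ((2 : ℂ)⁻¹ • (ptri (envMap W e J x) (envMap W e J y) (envMap W e J z) +
          ptri (envMap W e J z) (envMap W e J y) (envMap W e J x)))) ∧
    -- `α (eW)` generates `eW ⊕ W^t e^t` as a TRO:
    (∀ T : Submodule ℂ ((H →L[ℂ] H) × (H →L[ℂ] H)),
      IsClosed (T : Set ((H →L[ℂ] H) × (H →L[ℂ] H))) →
      (∀ a ∈ T, ∀ b ∈ T, ∀ c ∈ T, ptri a b c ∈ T) →
      (∀ x, envMap W e J x ∈ T) → envTRO W e J ≤ T) ∧
    -- the universal property: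
    (∀ (K' H' : Type) [NormedAddCommGroup K'] [InnerProductSpace ℂ K'] [CompleteSpace K']
      [NormedAddCommGroup H'] [InnerProductSpace ℂ H'] [CompleteSpace H'],
      ∀ S : Submodule ℂ (K' →L[ℂ] H'), IsTRO S →
      ∀ π : ↥(corner W e) →ₗ[ℂ] (K' →L[ℂ] H'),
        (∀ x, π x ∈ S) →
        (∀ (x y z : ↥(corner W e)) (h : jtri (x : H →L[ℂ] H) y z ∈ corner W e),
          π ⟨jtri (x : H →L[ℂ] H) y z, h⟩ = jtri (π x) (π y) (π z)) →
        ∃ πt : ↥(envTRO W e J) →ₗ[ℂ] (K' →L[ℂ] H'),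
          (∀ a, πt a ∈ S) ∧
          (∀ (a b c : ↥(envTRO W e J))
            (h : ptri (a : (H →L[ℂ] H) × (H →L[ℂ] H)) b c ∈ envTRO W e J),
            πt ⟨ptri (a : (H →L[ℂ] H) × (H →L[ℂ] H)) b c, h⟩ = tri (πt a) (πt b) (πt c)) ∧
          (∀ (x : ↥(corner W e)) (hx : envMap W e J x ∈ envTRO W e J),
            πt ⟨envMap W e J x, hx⟩ = π x)) := by
  lift e to W using he
  obtain ⟨w, hwW, hwe⟩ := hW.exists_isHalving e.2 ⟨heIdem, heSA⟩
  lift w to W using hwW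
  have hw : IsHalving e w := isHalving_coe_iff.mp hwe
  refine ⟨envMap_mem_envTRO hJ W e, fun x y hxy => Subtype.ext (congrArg Prod.fst hxy),
    envMap_jtri hJ W e, fun T _ hT hα => envTRO_le hT hα hJ hw, ?_⟩
  intro K' H' _ _ _ _ _ _ S hS π hπS hπ
  exact ⟨envLift hJ w π, envLift_mem hJ hS hπS, envLift_ptri hJ hπ hw, envLift_envMap hJ⟩
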